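/- Let σ be an antisymmetric bilinear form on ℤ^n whose matrix Σ = (σ_ij) arises from an ideal triangulation of a surface of genus g with p punctures (so n = 6g + 3p - 6). Then σ is equivalent over ℤ to the block diagonal form consisting of g blocks [[0,-2],[2,0]], k = 2g + p - 3 blocks [[0,-1],[1,0]], and p blocks (0). -/

import Mathlib

/-- A combinatorial model (oriented combinatorial map) of an ideal triangulation of a closed
orientable surface of genus `g` with `p` punctures, having `n` edges.  The darts `D` are the
corners (spikes) of the triangles; `φ` is the rotation moving counterclockwise to the next
corner of the same triangle (faces are triangles), `α` is the fixed-point-free involution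
pairing the two sides of each edge, `edge` labels each dart by the edge of the triangulation
on its left, and `vert` records the puncture towards which the spike converges (orbits of the
vertex rotation `φ ∘ α`).  Connectivity and the Euler relation `p - n + F = 2 - 2g` make this
the triangulation of the genus `g` surface with `p` punctures. -/
structure IdealTriangulation (g p n : ℕ) where
  D : Type
  [fintypeD : Fintype D]
  [decEqD : DecidableEq D]
  α : Equiv.Perm D
  φ : Equiv.Perm D
  α_invol : ∀ d, α (α d) = d
  α_fpf : ∀ d, α d ≠ d
  φ_triangles : ∀ d, φ (φ (φ d)) = d
  φ_fpf : ∀ d, φ d ≠ d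
  edge : D → Fin n
  edge_surj : Function.Surjective edge
  edge_fiber : ∀ d d', edge d = edge d' ↔ (d' = d ∨ d' = α d)
  vert : D → Fin p
  vert_surj : Function.Surjective vert
  vert_rot : ∀ d, vert (φ (α d)) = vert d
  vert_orbit : ∀ d d', vert d = vert d' → ∃ k : ℕ, ((α.trans φ) ^ k) d = d'
  connected : ∀ d d', ∃ w ∈ Subgroup.closure ({α, φ} : Set (Equiv.Perm D)), w d = d'
  card_darts : Fintype.card D = 2 * n
  euler : (p : ℤ) - (n : ℤ) + (Fintype.card D : ℤ) / 3 = 2 - 2 * (g : ℤ)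

attribute [instance] IdealTriangulation.fintypeD IdealTriangulation.decEqD

/-- The number `a_ij` of spikes delimited on the left by edge `i` and on the right by
edge `j`. -/
noncomputable def IdealTriangulation.spikeCount {g p n : ℕ} (T : IdealTriangulation g p n)
    (i j : Fin n) : ℕ :=
  (Finset.univ.filter (fun d => T.edge d = i ∧ T.edge (T.φ d) = j)).card

/-- The Weil–Petersson matrix `σ_ij = a_ij - a_ji` of an ideal triangulation. -/
noncomputable def IdealTriangulation.wpMatrix {g p n : ℕ} (T : IdealTriangulation g p n) :
    Matrix (Fin n) (Fin n) ℤ :=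
  Matrix.of fun i j => (T.spikeCount i j : ℤ) - (T.spikeCount j i : ℤ)

/-- The block diagonal antisymmetric form with `g` blocks `[[0,-2],[2,0]]`, `k` blocks
`[[0,-1],[1,0]]` and the remaining diagonal entries `0`. -/
def wpBlockForm (g k n : ℕ) : Matrix (Fin n) (Fin n) ℤ :=
  Matrix.of fun i j =>
    if i.val < 2 * g ∧ j.val < 2 * g then
      (if j.val = i.val + 1 ∧ i.val % 2 = 0 then -2
       else if i.val = j.val + 1 ∧ j.val % 2 = 0 then 2 else 0)
    else if 2 * g ≤ i.val ∧ i.val < 2 * g + 2 * k ∧ 2 * g ≤ j.val ∧ j.val < 2 * g + 2 * k then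
      (if j.val = i.val + 1 ∧ i.val % 2 = 0 then -1
       else if i.val = j.val + 1 ∧ j.val % 2 = 0 then 1 else 0)
    else 0

/-!
An alternating form over a principal ideal domain is an orthogonal sum of planes
`[[0, -d i], [d i, 0]]` and a null part, so over `ℤ` it suffices to show that every `d i` is `1` or
`2` and to count how often each occurs.

If `σ z = r • x`, then twice the corner coordinates of `z` are constant modulo `r` around each
puncture. As the weight of an edge is the sum of the corner coordinates at its ends, `2 • z` is
congruent modulo `r` to an edge weight induced by weights on the punctures, and such edge weights
lie in the kernel of `σ`. Writing the difference as `r • y`, we get `σ y = 2 • x`: the number `2`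
kills the torsion of the cokernel, so each `d i` divides `2`. For `r = 0` over `ℚ` the same argument
shows that edge weights induced from the punctures make up the whole kernel, so that `σ` has rank
`n - p`. Modulo `2`, the form factors as `Mᵀ * M` with `M` the incidence matrix of triangles and
edges, and connectedness of the surface gives rank `F - 2`, where `F` is the number of triangles.
-/

open Module Matrix
open LinearMap (BilinForm)
open scoped Kronecker

section AlternatingForms

variable {R V : Type*} [CommRing R] [AddCommGroup V] [Module R V]

/-- The matrix of an alternating form in a basis adapted to a splitting into rank-two planes and a
null part: it consists of a block `[[0, -d i], [d i, 0]]` for each `i : ι`, with basis vectors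
`.inl (i, 0)` and `.inl (i, 1)`, and is zero on `κ`. -/
def alternatingBlocks {ι κ : Type*} [DecidableEq ι] (d : ι → R) :
    Matrix ((ι × Fin 2) ⊕ κ) ((ι × Fin 2) ⊕ κ) R :=
  fromBlocks (diagonal d ⊗ₖ !![0, -1; 1, 0]) 0 0 0

theorem bijective_linearCombination_coprod_subtype [IsDomain R] {B : BilinForm R V} (hB : B.IsAlt)
    {u v : V} {m : R} (hm : m ≠ 0) (huv : B u v = -m) (hu : ∀ w, m ∣ B u w)
    (hv : ∀ w, m ∣ B v w) :
    Function.Bijective ((Fintype.linearCombination R ![u, v]).coprod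
      ((B u).ker ⊓ (B v).ker).subtype) := by
  have hvu : B v u = m := by rw [← hB.neg_eq u v, huv, neg_neg]
  constructor
  · rw [← LinearMap.ker_eq_bot, LinearMap.ker_eq_bot']
    rintro ⟨a, w, hwu, hwv⟩ h
    replace h : a 0 • u + a 1 • v + w = 0 := by simpa [Fintype.linearCombination_apply] using h
    replace hwu : B u w = 0 := hwu
    replace hwv : B v w = 0 := hwv
    have ha₁ : a 1 = 0 := by
      simpa [hB.self_eq_zero, huv, hwu, hm] using congrArg (B u) h
    have ha₀ : a 0 = 0 := by
      simpa [hB.self_eq_zero, hvu, hwv, hm] using congrArg (B v) h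
    have hw : w = 0 := by simpa [ha₀, ha₁] using h
    ext i
    · fin_cases i <;> simp [ha₀, ha₁]
    · simp [hw]
  · intro x
    obtain ⟨s, hs⟩ := hu x
    obtain ⟨t, ht⟩ := hv x
    refine ⟨(![t, -s], ⟨x - t • u + s • v, ?_, ?_⟩), ?_⟩
    · simp [hB.self_eq_zero, huv, hs, mul_comm]
    · simp [hB.self_eq_zero, hvu, ht, mul_comm]
    · simp only [LinearMap.coprod_apply, Fintype.linearCombination_apply, Fin.sum_univ_two,
        cons_val_zero, cons_val_one, Submodule.subtype_apply, neg_smul]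
      abel

theorem exists_basis_apply_eq_alternatingBlocks_cons [IsDomain R] {B : BilinForm R V}
    (hB : B.IsAlt) {u v : V} {m : R} (hm : m ≠ 0) (huv : B u v = -m) (hu : ∀ w, m ∣ B u w)
    (hv : ∀ w, m ∣ B v w) {r s : ℕ} {d : Fin r → R}
    (c : Basis ((Fin r × Fin 2) ⊕ Fin s) R ↥((B u).ker ⊓ (B v).ker))
    (hc : ∀ x y, B (c x) (c y) = alternatingBlocks d x y) :
    ∃ b : Basis ((Fin (r + 1) × Fin 2) ⊕ Fin s) R V,
      ∀ x y, B (b x) (b y) = alternatingBlocks (Fin.cons m d : Fin (r + 1) → R) x y := by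
  let ε : Fin 2 ⊕ (Fin r × Fin 2) ⊕ Fin s ≃ (Fin (r + 1) × Fin 2) ⊕ Fin s :=
    (Equiv.sumAssoc _ _ _).symm.trans <| Equiv.sumCongr
      (optionProdEquiv.symm.trans ((finSuccEquiv r).symm.prodCongr (Equiv.refl _))) (Equiv.refl _)
  let e := LinearEquiv.ofBijective _
    (bijective_linearCombination_coprod_subtype hB hm huv hu hv)
  let b := (((Pi.basisFun R (Fin 2)).prod c).map e).reindex ε
  have b_zero (k) : b (.inl (0, k)) = ![u, v] k := by
    have : ε.symm (.inl (0, k)) = .inl k := by simp [ε]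
    simp [b, e, this]
  have b_succ (i k) : b (.inl (Fin.succ i, k)) = c (.inl (i, k)) := by
    have : ε.symm (.inl (Fin.succ i, k)) = .inr (.inl (i, k)) := by simp [ε]
    simp [b, e, this]
  have b_inr (j) : b (.inr j) = c (.inr j) := by
    have : ε.symm (.inr j) = .inr (.inr j) := by simp [ε]
    simp [b, e, this]
  have left_zero (k x) : B (![u, v] k) (c x) = 0 := by
    fin_cases k
    exacts [(c x).2.1, (c x).2.2]
  have right_zero (k x) : B (c x) (![u, v] k) = 0 := by
    rw [← hB.neg_eq, left_zero, neg_zero]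
  refine ⟨b, ?_⟩
  rintro (⟨i, k⟩ | j) (⟨i', k'⟩ | j')
  · cases i using Fin.cases <;> cases i' using Fin.cases
    · have hvu : B v u = m := by rw [← hB.neg_eq u v, huv, neg_neg]
      fin_cases k <;> fin_cases k' <;>
        simp [b_zero, alternatingBlocks, hB.self_eq_zero, huv, hvu]
    · simp [b_zero, b_succ, alternatingBlocks, left_zero, diagonal,
        (Fin.succ_ne_zero _).symm]
    · simp [b_zero, b_succ, alternatingBlocks, right_zero]
    · simp [b_succ, hc, alternatingBlocks, diagonal]
  · cases i using Fin.cases <;>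
      simp [b_zero, b_succ, b_inr, alternatingBlocks, left_zero, hc]
  · cases i' using Fin.cases <;>
      simp [b_zero, b_succ, b_inr, alternatingBlocks, right_zero, hc]
  · simp [b_inr, alternatingBlocks, hc]

theorem exists_apply_eq_neg_and_forall_dvd [IsDomain R] [IsPrincipalIdealRing R]
    [NormalizationMonoid R] {B : BilinForm R V} (hB : B.IsAlt) (hB₀ : B ≠ 0) :
    ∃ (u v : V) (m : R), m ≠ 0 ∧ normalize m = m ∧ B u v = -m ∧
      (∀ w, m ∣ B u w) ∧ ∀ w, m ∣ B v w := by
  -- A maximal ideal among the images of the functionals `B u` plays the role of a minimal value.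
  obtain ⟨_, ⟨u, rfl⟩, hmax⟩ := set_has_maximal_iff_noetherian.2 (inferInstance : IsNoetherian R R)
    (Set.range fun u => (B u).range) (Set.range_nonempty _)
  obtain ⟨m, hspan, hnorm⟩ : ∃ m, (B u).range = Ideal.span {m} ∧ normalize m = m := by
    obtain ⟨m₀, hm₀⟩ := IsPrincipalIdealRing.principal (B u).range
    refine ⟨normalize m₀, ?_, normalize_idem m₀⟩
    rw [hm₀]
    exact (Ideal.span_singleton_eq_span_singleton.2 (normalize_associated m₀)).symm
  have dvd_left (w) : m ∣ B u w := by
    rw [← Ideal.mem_span_singleton, ← hspan]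
    exact ⟨w, rfl⟩
  obtain ⟨v, hv⟩ : -m ∈ (B u).range := by
    rw [hspan]; exact neg_mem (Ideal.mem_span_singleton_self m)
  have range_le : (B u).range ≤ (B v).range := by
    rw [hspan, Ideal.span_singleton_le_iff_mem]
    exact ⟨u, by rw [← hB.neg_eq u v, hv, neg_neg]⟩
  have range_eq : (B v).range = (B u).range :=
    (range_le.eq_of_not_lt (hmax _ ⟨v, rfl⟩)).symm
  refine ⟨u, v, m, ?_, hnorm, hv, dvd_left, fun w => ?_⟩
  · rintro rfl
    refine hB₀ (LinearMap.ext fun w => LinearMap.range_eq_bot.1 ?_)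
    have hbot : (B u).range = ⊥ := by simpa using hspan
    by_contra hw
    refine hmax _ ⟨w, rfl⟩ ?_
    change (B u).range < (B w).range
    exact hbot ▸ bot_lt_iff_ne_bot.2 hw
  · rw [← Ideal.mem_span_singleton, ← hspan, ← range_eq]
    exact ⟨w, rfl⟩

theorem exists_basis_apply_eq_alternatingBlocks {R : Type*} [CommRing R] [IsDomain R]
    [IsPrincipalIdealRing R] [NormalizationMonoid R] {V : Type*} [AddCommGroup V] [Module R V]
    [Module.Free R V] [Module.Finite R V] {B : BilinForm R V} (hB : B.IsAlt) :
    ∃ (r s : ℕ) (d : Fin r → R) (b : Basis ((Fin r × Fin 2) ⊕ Fin s) R V),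
      (∀ i, d i ≠ 0 ∧ normalize (d i) = d i) ∧
        ∀ x y, B (b x) (b y) = alternatingBlocks d x y := by
  induction hN : finrank R V using Nat.strong_induction_on generalizing V with
  | _ N ih =>
  subst hN
  by_cases hB₀ : B = 0
  · refine ⟨0, finrank R V, Fin.elim0,
      (finBasis R V).reindex (Equiv.emptySum (Fin 0 × Fin 2) _).symm, fun i => i.elim0, ?_⟩
    rintro (⟨i, -⟩ | j) (⟨i', -⟩ | j')
    · exact i.elim0
    · exact i.elim0
    · exact i'.elim0
    · simp [hB₀, alternatingBlocks]
  obtain ⟨u, v, m, hm, hnorm, huv, hu, hv⟩ := exists_apply_eq_neg_and_forall_dvd hB hB₀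
  have hfinrank : finrank R V = 2 + finrank R ↥((B u).ker ⊓ (B v).ker) := by
    simpa using (LinearEquiv.ofBijective _
      (bijective_linearCombination_coprod_subtype hB hm huv hu hv)).finrank_eq.symm
  obtain ⟨r, s, d, c, hd, hc⟩ := ih _ (by lia)
    (B := B.restrict ((B u).ker ⊓ (B v).ker)) (fun w => hB w) rfl
  obtain ⟨b, hb⟩ := exists_basis_apply_eq_alternatingBlocks_cons hB hm huv hu hv c hc
  exact ⟨r + 1, s, Fin.cons m d, b, Fin.cases ⟨hm, hnorm⟩ hd, hb⟩

end AlternatingForms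

theorem forall_dvd_of_basis {R V ι : Type*} [CommRing R] [AddCommGroup V] [Module R V]
    (b : Basis ι R V) (f : V →ₗ[R] R) {a : R} (h : ∀ i, a ∣ f (b i)) (v : V) : a ∣ f v := by
  have hle : ⊤ ≤ Submodule.comap f (Ideal.span {a}) := by
    rw [← b.span_eq, Submodule.span_le]
    rintro _ ⟨i, rfl⟩
    exact Ideal.mem_span_singleton.2 (h i)
  exact Ideal.mem_span_singleton.1 (hle Submodule.mem_top)

section AlternatingMatrices

variable {R R' K m ι κ : Type*} [CommRing R] [CommRing R'] [Field K] [Fintype m] [DecidableEq m]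

theorem exists_isUnit_det_mul_mul_transpose_eq {S : Matrix m m R} {N : Matrix ι ι R}
    (b : Basis ι R (m → R)) (hb : ∀ x y, S.toBilin' (b x) (b y) = N x y) (e : m ≃ ι) :
    ∃ A : Matrix m m R, IsUnit A.det ∧ A * S * Aᵀ = N.submatrix e e := by
  let A : Matrix m m R := of fun i => b (e i)
  have hA : A = ((Pi.basisFun R m).toMatrix (b.reindex e.symm))ᵀ := by
    ext i j
    simp [A, Basis.toMatrix_apply]
  refine ⟨A, ?_, ?_⟩
  · rw [hA, det_transpose, ← Basis.det_apply]
    exact (Pi.basisFun R m).isUnit_det _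
  · ext i j
    rw [mul_mul_apply, submatrix_apply, ← hb, toBilin'_apply']
    rfl

theorem rank_map_mul_mul_transpose (f : R →+* R') {A : Matrix m m R} (hA : IsUnit A.det)
    (S : Matrix m m R) : ((A * S * Aᵀ).map f).rank = (S.map f).rank := by
  have hAf : IsUnit (A.map f).det := by
    rw [← RingHom.mapMatrix_apply, ← RingHom.map_det]
    exact hA.map f
  have hAft : IsUnit (Aᵀ.map f).det := by rwa [transpose_map, det_transpose]
  rw [Matrix.map_mul, Matrix.map_mul, rank_mul_eq_left_of_isUnit_det _ _ hAft,
    rank_mul_eq_right_of_isUnit_det _ _ hAf]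

variable [DecidableEq ι]

theorem map_alternatingBlocks (f : R →+* R') (d : ι → R) :
    (alternatingBlocks d : Matrix ((ι × Fin 2) ⊕ κ) _ R).map f = alternatingBlocks (f ∘ d) := by
  ext (⟨i, k⟩ | j) (⟨i', k'⟩ | j')
  · fin_cases k <;> fin_cases k' <;> simp [alternatingBlocks, diagonal, apply_ite f]
  all_goals simp [alternatingBlocks]

theorem rank_alternatingBlocks [Fintype ι] [Fintype κ] (d : ι → K) :
    (alternatingBlocks d : Matrix ((ι × Fin 2) ⊕ κ) _ K).rank = 2 * Nat.card {i // d i ≠ 0} := by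
  classical
  let J : Matrix ((ι × Fin 2) ⊕ κ) ((ι × Fin 2) ⊕ κ) K :=
    fromBlocks ((1 : Matrix ι ι K) ⊗ₖ !![0, -1; 1, 0]) 0 0 1
  have hJ : IsUnit J.det := by simp [J, det_kronecker]
  let δ : (ι × Fin 2) ⊕ κ → K := Sum.elim (fun x => d x.1) 0
  have factor : alternatingBlocks d = diagonal δ * J := by
    ext (⟨i, k⟩ | j) (⟨i', k'⟩ | j') <;> rw [diagonal_mul] <;>
      simp [alternatingBlocks, J, δ, diagonal, one_apply]
  let support : {x // δ x ≠ 0} ≃ {i // d i ≠ 0} × Fin 2 :=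
    { toFun
        | ⟨.inl (i, k), h⟩ => (⟨i, h⟩, k)
        | ⟨.inr _, h⟩ => absurd rfl h
      invFun x := ⟨.inl (x.1, x.2), x.1.2⟩
      left_inv := by
        rintro ⟨⟨i, k⟩ | j, h⟩
        · rfl
        · exact absurd rfl h
      right_inv _ := rfl }
  rw [factor, rank_mul_eq_left_of_isUnit_det _ _ hJ, rank_diagonal, ← Nat.card_eq_fintype_card,
    Nat.card_congr support, Nat.card_prod, Nat.card_fin, mul_comm]

theorem rank_map_eq_two_mul_card [Finite ι] [Finite κ] (f : R →+* K) {S : Matrix m m R}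
    {d : ι → R} (b : Basis ((ι × Fin 2) ⊕ κ) R (m → R))
    (hb : ∀ x y, S.toBilin' (b x) (b y) = alternatingBlocks d x y) :
    (S.map f).rank = 2 * Nat.card {i // f (d i) ≠ 0} := by
  have := Fintype.ofFinite ι
  have := Fintype.ofFinite κ
  have := f.domain_nontrivial
  obtain ⟨A, hA, hAS⟩ :=
    exists_isUnit_det_mul_mul_transpose_eq b hb ((Pi.basisFun R m).indexEquiv b)
  rw [← rank_map_mul_mul_transpose f hA S, hAS, ← submatrix_map, rank_submatrix,
    map_alternatingBlocks, rank_alternatingBlocks]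
  rfl

theorem dvd_of_forall_exists_mulVec_eq_smul [IsDomain R] {S : Matrix m m R} {d : ι → R}
    (b : Basis ((ι × Fin 2) ⊕ κ) R (m → R))
    (hb : ∀ x y, S.toBilin' (b x) (b y) = alternatingBlocks d x y) {c : R}
    (hc : ∀ r : R, r ≠ 0 → ∀ z x, S *ᵥ z = r • x → ∃ y, S *ᵥ y = c • x) {i : ι} (hi : d i ≠ 0) :
    d i ∣ c := by
  have dvd_left : ∀ w, d i ∣ S.toBilin' (b (.inl (i, 0))) w := by
    refine forall_dvd_of_basis b _ ?_
    rintro (⟨i', k⟩ | j) <;> rw [hb]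
    · obtain rfl | hne := eq_or_ne i i' <;> simp [alternatingBlocks, *]
    · simp [alternatingBlocks]
  have dvd_right : ∀ w, d i ∣ LinearMap.flip S.toBilin' (b (.inl (i, 1))) w := by
    refine forall_dvd_of_basis b _ ?_
    rintro (⟨i', k⟩ | j) <;> rw [LinearMap.flip_apply, hb]
    · obtain rfl | hne := eq_or_ne i' i <;> simp [alternatingBlocks, *]
    · simp [alternatingBlocks]
  choose x hx using fun j => dvd_right (Pi.single j 1)
  have hSx : S *ᵥ b (.inl (i, 1)) = d i • x := by
    ext j
    simpa [toBilin'_apply'] using hx j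
  obtain ⟨y, hy⟩ := hc _ hi _ _ hSx
  have hbx : b (.inl (i, 0)) ⬝ᵥ x = -1 := by
    have h := hb (.inl (i, 0)) (.inl (i, 1))
    rw [toBilin'_apply', hSx, dotProduct_smul] at h
    apply mul_left_cancel₀ hi
    simpa [alternatingBlocks] using h
  have h := dvd_left y
  rw [toBilin'_apply', hy, dotProduct_smul, hbx] at h
  simpa using h

end AlternatingMatrices

theorem exists_wpBlockForm_eq_submatrix (g k s : ℕ) {n : ℕ} (hn : 2 * (g + k) + s = n) :
    ∃ e : Fin n ≃ ((Fin g ⊕ Fin k) × Fin 2) ⊕ Fin s,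
      wpBlockForm g k n =
        (alternatingBlocks (Sum.elim (fun _ => 2) fun _ => 1)).submatrix e e := by
  let ε : ((Fin g ⊕ Fin k) × Fin 2) ⊕ Fin s ≃ Fin n :=
    (((finSumFinEquiv.prodCongr (Equiv.refl _)).trans finProdFinEquiv).sumCongr
      (Equiv.refl _)).trans (finSumFinEquiv.trans (finCongr (by lia)))
  have val_inl_inl (i k) : (ε (.inl (.inl i, k))).val = k + 2 * i := by simp [ε]
  have val_inl_inr (i k) : (ε (.inl (.inr i, k))).val = k + 2 * (g + i) := by simp [ε]
  have val_inr (j) : (ε (.inr j)).val = 2 * (g + k) + j := by simp [ε, mul_comm]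
  clear_value ε
  refine ⟨ε.symm, ?_⟩
  ext i j
  obtain ⟨x, rfl⟩ := ε.surjective i
  obtain ⟨y, rfl⟩ := ε.surjective j
  rw [submatrix_apply, ε.symm_apply_apply, ε.symm_apply_apply]
  rcases x with ⟨i | i, a⟩ | i <;> rcases y with ⟨j | j, b⟩ | j <;>
    simp only [wpBlockForm, of_apply, val_inl_inl, val_inl_inr, val_inr, alternatingBlocks,
      fromBlocks_apply₁₁, fromBlocks_apply₁₂, fromBlocks_apply₂₁, fromBlocks_apply₂₂,
      Matrix.zero_apply, kroneckerMap_apply, diagonal_apply, Sum.elim_inl, Sum.elim_inr,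
      Sum.inl.injEq, Sum.inr.injEq, reduceCtorEq, Fin.ext_iff]
  case inl.inl.inl.inl | inl.inr.inl.inr =>
    fin_cases a <;> fin_cases b <;> simp <;> lia
  all_goals lia

theorem exists_alternatingBlocks_comp_eq_submatrix {R ι ι' κ : Type*} [CommRing R]
    [DecidableEq ι] [DecidableEq ι'] (σ : ι ≃ ι') (d : ι' → R) :
    ∃ ε : (ι × Fin 2) ⊕ κ ≃ (ι' × Fin 2) ⊕ κ,
      alternatingBlocks (d ∘ σ) = (alternatingBlocks d).submatrix ε ε := by
  refine ⟨(σ.prodCongr (Equiv.refl _)).sumCongr (Equiv.refl _), ?_⟩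
  ext (⟨i, a⟩ | i) (⟨j, b⟩ | j) <;> simp [alternatingBlocks, diagonal]

theorem exists_equiv_sum_elim_eq {α ι : Type*} [Finite ι] {a b : α} {d : ι → α} {g k : ℕ}
    (hd : ∀ i, d i = a ∨ d i = b) (ha : Nat.card {i // d i = a} = g)
    (hb : Nat.card {i // ¬d i = a} = k) :
    ∃ σ : ι ≃ Fin g ⊕ Fin k, Sum.elim (fun _ => a) (fun _ => b) ∘ σ = d := by
  classical
  refine ⟨(Equiv.sumCompl fun i => d i = a).symm.trans
    ((Finite.equivFinOfCardEq ha).sumCongr (Finite.equivFinOfCardEq hb)), funext fun i => ?_⟩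
  obtain ⟨⟨i, hi⟩ | ⟨i, hi⟩, rfl⟩ := (Equiv.sumCompl fun i => d i = a).surjective i <;>
    rw [Function.comp_apply, Equiv.trans_apply, Equiv.symm_apply_apply]
  · simp [hi]
  · simp [(hd i).resolve_left hi]

theorem exists_wpBlockForm_eq_mul_mul_transpose_of_basis {g k n r s : ℕ}
    {S : Matrix (Fin n) (Fin n) ℤ} {d : Fin r → ℤ}
    (b : Basis ((Fin r × Fin 2) ⊕ Fin s) ℤ (Fin n → ℤ))
    (hb : ∀ x y, S.toBilin' (b x) (b y) = alternatingBlocks d x y)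
    (hd : ∀ i, d i = 2 ∨ d i = 1) (hg : Nat.card {i // d i = 2} = g)
    (hk : Nat.card {i // ¬d i = 2} = k) :
    ∃ A : Matrix (Fin n) (Fin n) ℤ, IsUnit A.det ∧ wpBlockForm g k n = A * S * Aᵀ := by
  obtain ⟨σ, rfl⟩ := exists_equiv_sum_elim_eq hd hg hk
  have hr : r = g + k := by simpa using Fintype.card_congr σ
  have hn : n = 2 * (g + k) + s := by
    simpa [hr, mul_comm] using finrank_eq_card_basis b
  obtain ⟨e, he⟩ := exists_wpBlockForm_eq_submatrix g k s hn.symm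
  obtain ⟨ε, hε⟩ := exists_alternatingBlocks_comp_eq_submatrix (κ := Fin s) σ
    (Sum.elim (fun _ => 2) fun _ => 1 : _ → ℤ)
  obtain ⟨A, hA, hAS⟩ := exists_isUnit_det_mul_mul_transpose_eq b hb (e.trans ε.symm)
  refine ⟨A, hA, ?_⟩
  rw [he, hAS, hε, submatrix_submatrix]
  congr 1 <;> ext <;> simp

theorem exists_wpBlockForm_eq_mul_mul_transpose {g k n : ℕ} {S : Matrix (Fin n) (Fin n) ℤ}
    (hS : S.toBilin'.IsAlt)
    (htors : ∀ r : ℤ, r ≠ 0 → ∀ z x, S *ᵥ z = r • x → ∃ y, S *ᵥ y = (2 : ℤ) • x)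
    (hrank : (S.map (Int.castRingHom ℚ)).rank = 2 * (g + k))
    (hrank₂ : (S.map (Int.castRingHom (ZMod 2))).rank = 2 * k) :
    ∃ A : Matrix (Fin n) (Fin n) ℤ, IsUnit A.det ∧ wpBlockForm g k n = A * S * Aᵀ := by
  obtain ⟨r, s, d, b, hd, hb⟩ := exists_basis_apply_eq_alternatingBlocks hS
  have hd₂₁ (i) : d i = 2 ∨ d i = 1 := by
    have hdvd := dvd_of_forall_exists_mulVec_eq_smul b hb htors (hd i).1
    have hle := Int.le_of_dvd two_pos hdvd
    have hnonneg := Int.nonneg_of_normalize_eq_self (hd i).2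
    have hne := (hd i).1
    lia
  have hr : 2 * r = 2 * (g + k) := by
    have hne (i) : Int.castRingHom ℚ (d i) ≠ 0 := Int.cast_ne_zero.2 (hd i).1
    rw [← hrank, rank_map_eq_two_mul_card _ b hb, Nat.card_congr (Equiv.subtypeUnivEquiv hne),
      Nat.card_fin]
  have hk : Nat.card {i // ¬d i = 2} = k := by
    have hiff (i) : Int.castRingHom (ZMod 2) (d i) ≠ 0 ↔ ¬d i = 2 := by
      rcases hd₂₁ i with h | h <;> rw [h] <;> decide
    have h := rank_map_eq_two_mul_card (Int.castRingHom (ZMod 2)) b hb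
    simp only [hrank₂, hiff] at h
    lia
  have hg : Nat.card {i // d i = 2} = g := by
    have h := Nat.card_congr (Equiv.sumCompl fun i => d i = 2)
    rw [Nat.card_sum, hk, Nat.card_fin] at h
    lia
  exact exists_wpBlockForm_eq_mul_mul_transpose_of_basis b hb hd₂₁ hg hk

section IncidenceMatrices

variable {R D X Y : Type*} [Semiring R] [Fintype D] [DecidableEq X] [DecidableEq Y]

/-- The matrix over `R` whose `(x, y)` entry is the number of elements of `D` lying over both `x`
and `y`; for the darts of a triangulation it records incidences between edges, punctures and
triangles. -/
def incidenceMatrix (R : Type*) [Semiring R] (f : D → X) (g : D → Y) : Matrix X Y R :=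
  of fun x y => (Finset.card {d | f d = x ∧ g d = y} : R)

theorem transpose_incidenceMatrix (f : D → X) (g : D → Y) :
    (incidenceMatrix R f g)ᵀ = incidenceMatrix R g f := by
  ext y x
  simp [incidenceMatrix, and_comm]

theorem incidenceMatrix_comp_perm (f : D → X) (g : D → Y) (σ : Equiv.Perm D) :
    incidenceMatrix R (f ∘ σ) (g ∘ σ) = incidenceMatrix R f g := by
  ext x y
  simp only [incidenceMatrix, of_apply]
  congr 1
  exact Finset.card_equiv σ (by simp)

theorem incidenceMatrix_mulVec [Fintype Y] (f : D → X) (g : D → Y) (v : Y → R) (x : X) :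
    (incidenceMatrix R f g *ᵥ v) x = ∑ d with f d = x, v (g d) := by
  simp only [mulVec, dotProduct, incidenceMatrix, of_apply, ← Finset.filter_filter,
    Finset.cast_card, Finset.sum_mul]
  rw [← Finset.sum_fiberwise _ g]
  refine Finset.sum_congr rfl fun y _ => Finset.sum_congr rfl ?_
  simp +contextual

end IncidenceMatrices

theorem finrank_range_comp_add_finrank_ker {K U V W : Type*} [DivisionRing K] [AddCommGroup U]
    [Module K U] [AddCommGroup V] [Module K V] [FiniteDimensional K V] [AddCommGroup W]
    [Module K W] {f : V →ₗ[K] W} {g : U →ₗ[K] V} (h : f.ker ≤ g.range) :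
    finrank K (f ∘ₗ g).range + finrank K f.ker = finrank K g.range := by
  rw [LinearMap.range_comp, ← LinearMap.range_domRestrict,
    ← LinearMap.finrank_range_add_finrank_ker (f.domRestrict g.range), LinearMap.ker_domRestrict]
  congr 1
  exact (Submodule.comapSubtypeEquivOfLe h).finrank_eq.symm

namespace IdealTriangulation

variable {g p n : ℕ} (T : IdealTriangulation g p n) {R : Type*} [CommRing R]

theorem edge_α (d : T.D) : T.edge (T.α d) = T.edge d :=
  ((T.edge_fiber d (T.α d)).2 (.inr rfl)).symm

theorem vert_φ (d : T.D) : T.vert (T.φ d) = T.vert (T.α d) := by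
  rw [← T.vert_rot (T.α d), T.α_invol]

theorem sum_edge_eq {M : Type*} [AddCommMonoid M] (f : T.D → M) (d : T.D) :
    ∑ d' with T.edge d' = T.edge d, f d' = f d + f (T.α d) := by
  have : ({d' | T.edge d' = T.edge d} : Finset T.D) = {d, T.α d} := by
    ext d'
    simp only [Finset.mem_filter_univ, Finset.mem_insert, Finset.mem_singleton]
    rw [eq_comm, T.edge_fiber]
  rw [this, Finset.sum_pair (T.α_fpf d).symm]

/-- Twice the corner coordinate of the edge weights `x` at the corner `T.vert d` of the triangle of
`d`: the sum of the weights of the two sides meeting there minus that of the opposite side. -/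
def cornerWeight (x : Fin n → R) (d : T.D) : R :=
  x (T.edge d) + x (T.edge (T.φ (T.φ d))) - x (T.edge (T.φ d))

theorem cornerWeight_add_cornerWeight_φ (x : Fin n → R) (d : T.D) :
    T.cornerWeight x d + T.cornerWeight x (T.φ d) = 2 * x (T.edge d) := by
  simp only [cornerWeight, T.φ_triangles]
  ring

theorem map_wpMatrix_eq_sub : T.wpMatrix.map (Int.castRingHom R) =
    incidenceMatrix R T.edge (T.edge ∘ T.φ) - incidenceMatrix R T.edge (T.edge ∘ T.φ ∘ T.φ) := by
  have h : (incidenceMatrix R T.edge (T.edge ∘ T.φ))ᵀ =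
      incidenceMatrix R T.edge (T.edge ∘ T.φ ∘ T.φ) := by
    rw [transpose_incidenceMatrix, ← incidenceMatrix_comp_perm T.edge (T.edge ∘ T.φ ∘ T.φ) T.φ]
    congr 1
    exact funext fun d => (congrArg T.edge (T.φ_triangles d)).symm
  rw [← h]
  ext i j
  simp [wpMatrix, spikeCount, incidenceMatrix]

theorem map_wpMatrix_mulVec (x : Fin n → R) (d : T.D) :
    (T.wpMatrix.map (Int.castRingHom R) *ᵥ x) (T.edge d) =
      T.cornerWeight x (T.φ (T.α d)) - T.cornerWeight x d := by
  simp only [map_wpMatrix_eq_sub, sub_mulVec, Pi.sub_apply, incidenceMatrix_mulVec, sum_edge_eq,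
    cornerWeight, Function.comp_apply, T.φ_triangles, T.edge_α]
  ring

/-- The edge weights induced by puncture weights `v`: each edge gets the sum of the weights at its
two ends. -/
def edgeSum (v : Fin p → R) : Fin n → R := incidenceMatrix R T.edge T.vert *ᵥ v

theorem edgeSum_edge (v : Fin p → R) (d : T.D) :
    T.edgeSum v (T.edge d) = v (T.vert d) + v (T.vert (T.α d)) := by
  simp only [edgeSum, incidenceMatrix_mulVec, sum_edge_eq]

theorem cornerWeight_edgeSum (v : Fin p → R) (d : T.D) :
    T.cornerWeight (T.edgeSum v) d = 2 * v (T.vert d) := by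
  simp only [cornerWeight, edgeSum_edge, ← T.vert_φ, T.φ_triangles]
  ring

theorem map_wpMatrix_mulVec_edgeSum (v : Fin p → R) :
    T.wpMatrix.map (Int.castRingHom R) *ᵥ T.edgeSum v = 0 := by
  ext i
  obtain ⟨d, rfl⟩ := T.edge_surj i
  rw [map_wpMatrix_mulVec, cornerWeight_edgeSum, cornerWeight_edgeSum, T.vert_rot, sub_self,
    Pi.zero_apply]

theorem dvd_cornerWeight_sub {r : R} {x z : Fin n → R}
    (h : T.wpMatrix.map (Int.castRingHom R) *ᵥ z = r • x) {d d' : T.D}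
    (hd : T.vert d = T.vert d') : r ∣ T.cornerWeight z d' - T.cornerWeight z d := by
  obtain ⟨k, rfl⟩ := T.vert_orbit d d' hd
  clear hd
  induction k with
  | zero => simp
  | succ k ih =>
    set c := ((T.α.trans T.φ) ^ k) d
    have hc : T.cornerWeight z (T.φ (T.α c)) - T.cornerWeight z c = r * x (T.edge c) := by
      rw [← map_wpMatrix_mulVec, h, Pi.smul_apply, smul_eq_mul]
    rw [pow_succ', Equiv.Perm.mul_apply, ← sub_add_sub_cancel _ (T.cornerWeight z c)]
    exact dvd_add ⟨_, hc⟩ ih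

theorem exists_two_smul_eq_edgeSum_add {r : R} {x z : Fin n → R}
    (h : T.wpMatrix.map (Int.castRingHom R) *ᵥ z = r • x) :
    ∃ v y, (2 : R) • z = T.edgeSum v + r • y := by
  choose s hs using T.vert_surj
  choose t ht using fun d => T.dvd_cornerWeight_sub h (hs (T.vert d))
  choose e he using T.edge_surj
  refine ⟨fun i => T.cornerWeight z (s i), fun i => t (e i) + t (T.φ (e i)), funext fun i => ?_⟩
  have hsum := T.cornerWeight_add_cornerWeight_φ z (e i)
  have hedge := T.edgeSum_edge (fun i => T.cornerWeight z (s i)) (e i)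
  rw [he] at hsum hedge
  rw [Pi.smul_apply, Pi.add_apply, Pi.smul_apply, smul_eq_mul, smul_eq_mul, ← hsum, hedge,
    ← T.vert_φ]
  linear_combination ht (e i) + ht (T.φ (e i))

theorem exists_map_wpMatrix_mulVec_eq_two_smul [IsDomain R] {r : R} (hr : r ≠ 0) {x z : Fin n → R}
    (h : T.wpMatrix.map (Int.castRingHom R) *ᵥ z = r • x) :
    ∃ y, T.wpMatrix.map (Int.castRingHom R) *ᵥ y = (2 : R) • x := by
  obtain ⟨v, y, hvy⟩ := T.exists_two_smul_eq_edgeSum_add h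
  refine ⟨y, smul_right_injective _ hr ?_⟩
  calc r • T.wpMatrix.map (Int.castRingHom R) *ᵥ y
      = T.wpMatrix.map (Int.castRingHom R) *ᵥ (T.edgeSum v + r • y) := by
        rw [mulVec_add, map_wpMatrix_mulVec_edgeSum, zero_add, mulVec_smul]
    _ = r • (2 : R) • x := by rw [← hvy, mulVec_smul, h, smul_comm]

theorem edgeSum_injective [IsDomain R] (h2 : (2 : R) ≠ 0) :
    Function.Injective (T.edgeSum : (Fin p → R) → Fin n → R) := by
  intro v w h
  ext i
  obtain ⟨d, rfl⟩ := T.vert_surj i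
  apply mul_left_cancel₀ h2
  rw [← T.cornerWeight_edgeSum, h, T.cornerWeight_edgeSum]

theorem rank_map_wpMatrix_add_punctures {K : Type*} [Field K] (h2 : (2 : K) ≠ 0) :
    (T.wpMatrix.map (Int.castRingHom K)).rank + p = n := by
  have hker : (T.wpMatrix.map (Int.castRingHom K)).mulVecLin.ker =
      (incidenceMatrix K T.edge T.vert).mulVecLin.range := by
    ext z
    rw [LinearMap.mem_ker, mulVecLin_apply]
    constructor
    · intro hz
      obtain ⟨v, y, hvy⟩ := T.exists_two_smul_eq_edgeSum_add (r := (0 : K)) (x := 0) (z := z)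
        (by rw [hz, smul_zero])
      rw [zero_smul, add_zero] at hvy
      refine ⟨(2 : K)⁻¹ • v, ?_⟩
      rw [map_smul, mulVecLin_apply, ← edgeSum, ← hvy, inv_smul_smul₀ h2]
    · rintro ⟨v, rfl⟩
      exact T.map_wpMatrix_mulVec_edgeSum v
  have hrange : finrank K (incidenceMatrix K T.edge T.vert).mulVecLin.range = p := by
    rw [LinearMap.finrank_range_of_inj (T.edgeSum_injective h2), finrank_fin_fun]
  have h := (T.wpMatrix.map (Int.castRingHom K)).mulVecLin.finrank_range_add_finrank_ker
  rwa [hker, hrange, finrank_fin_fun] at h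

theorem isAlt_toBilin'_wpMatrix : T.wpMatrix.toBilin'.IsAlt := by
  intro x
  have h : T.wpMatrixᵀ = -T.wpMatrix := by
    ext i j
    simp [wpMatrix]
  have hneg : x ⬝ᵥ T.wpMatrix *ᵥ x = -(x ⬝ᵥ T.wpMatrix *ᵥ x) := by
    conv_lhs => rw [dotProduct_mulVec, ← mulVec_transpose, h, neg_mulVec, neg_dotProduct,
      dotProduct_comm]
  rwa [toBilin'_apply', ← self_eq_neg]

theorem eq_of_invariant {β : Type*} {f : T.D → β} (hα : ∀ d, f (T.α d) = f d)
    (hφ : ∀ d, f (T.φ d) = f d) (d d' : T.D) : f d = f d' := by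
  obtain ⟨w, hw, rfl⟩ := T.connected d d'
  induction hw using Subgroup.closure_induction generalizing d with
  | mem w hw => rcases hw with rfl | rfl <;> simp [*]
  | one => rfl
  | mul v w _ _ hv hw => rw [Equiv.Perm.mul_apply, ← hv, ← hw]
  | inv w _ hw => rw [hw (w⁻¹ d), ← Equiv.Perm.mul_apply, mul_inv_cancel, Equiv.Perm.one_apply]

/-- The triangles of the triangulation: a triangle is encoded as the orbit under `φ` of its three
darts. -/
def Face : Type :=
  Quotient (Equiv.Perm.SameCycle.setoid T.φ)

/-- The triangle containing the dart `d`. -/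
def face (d : T.D) : T.Face :=
  Quotient.mk _ d

noncomputable instance : Fintype T.Face :=
  have : Finite T.Face := Quotient.finite _
  Fintype.ofFinite _

noncomputable instance : DecidableEq T.Face :=
  Classical.decEq _

theorem face_eq_iff (d d' : T.D) :
    T.face d' = T.face d ↔ d' = d ∨ d' = T.φ d ∨ d' = T.φ (T.φ d) := by
  have hφ : T.φ ^ (3 : ℤ) = 1 := Equiv.ext T.φ_triangles
  have hcycle : T.face d' = T.face d ↔ T.φ.SameCycle d d' := eq_comm.trans Quotient.eq
  rw [hcycle]
  constructor
  · rintro ⟨i, rfl⟩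
    rw [zpow_eq_zpow_emod i hφ]
    obtain h | h | h : i % 3 = 0 ∨ i % 3 = 1 ∨ i % 3 = 2 := by lia
    all_goals rw [h]
    exacts [.inl rfl, .inr (.inl rfl), .inr (.inr rfl)]
  · rintro (rfl | rfl | rfl)
    exacts [⟨0, rfl⟩, ⟨1, rfl⟩, ⟨2, rfl⟩]

theorem sum_face_eq {M : Type*} [AddCommMonoid M] (f : T.D → M) (d : T.D) :
    ∑ d' with T.face d' = T.face d, f d' = f d + f (T.φ d) + f (T.φ (T.φ d)) := by
  have hset : ({d' | T.face d' = T.face d} : Finset T.D) = {d, T.φ d, T.φ (T.φ d)} := by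
    ext d'
    simp [face_eq_iff]
  have hne : d ≠ T.φ (T.φ d) := fun h => T.φ_fpf d (by rw [h, T.φ_triangles, ← h])
  rw [hset, Finset.sum_insert (by simp [hne, (T.φ_fpf d).symm]),
    Finset.sum_pair (T.φ_fpf (T.φ d)).symm, add_assoc]

theorem face_surjective : Function.Surjective T.face :=
  Quotient.mk_surjective

theorem face_φ (d : T.D) : T.face (T.φ d) = T.face d :=
  (T.face_eq_iff d _).2 (.inr (.inl rfl))

theorem card_eq_three_mul_card_face : Fintype.card T.D = 3 * Fintype.card T.Face := by
  have h (t : T.Face) : ∑ d with T.face d = t, 1 = 3 := by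
    obtain ⟨d, rfl⟩ := T.face_surjective t
    exact T.sum_face_eq (fun _ => 1) d
  rw [Fintype.card_eq_sum_ones, ← Finset.sum_fiberwise _ T.face,
    Finset.sum_congr rfl fun t _ => h t, Finset.sum_const, Finset.card_univ, smul_eq_mul, mul_comm]

theorem map_wpMatrix_eq_mul [CharP R 2] : T.wpMatrix.map (Int.castRingHom R) =
    incidenceMatrix R T.edge T.face * incidenceMatrix R T.face T.edge := by
  refine mulVec_injective (funext fun x => funext fun i => ?_)
  obtain ⟨d, rfl⟩ := T.edge_surj i
  simp only [map_wpMatrix_mulVec, cornerWeight, ← mulVec_mulVec, incidenceMatrix_mulVec,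
    sum_edge_eq, sum_face_eq, T.φ_triangles, T.edge_α]
  linear_combination (-x (T.edge d) - x (T.edge (T.φ (T.φ d))) -
    x (T.edge (T.φ (T.φ (T.α d))))) * CharTwo.two_eq_zero (R := R)

theorem ker_incidenceMatrix_edge_face {K : Type*} [Field K] [CharP K 2] :
    (incidenceMatrix K T.edge T.face).mulVecLin.ker = K ∙ (1 : T.Face → K) := by
  ext w
  rw [LinearMap.mem_ker, mulVecLin_apply, Submodule.mem_span_singleton]
  constructor
  · intro hw
    have hα (d : T.D) : w (T.face (T.α d)) = w (T.face d) := by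
      have h := congrFun hw (T.edge d)
      rw [incidenceMatrix_mulVec, sum_edge_eq, Pi.zero_apply] at h
      rw [← CharTwo.add_eq_zero, add_comm, h]
    have hφ (d : T.D) : w (T.face (T.φ d)) = w (T.face d) := by rw [face_φ]
    obtain _ | ⟨⟨d⟩⟩ := isEmpty_or_nonempty T.D
    · exact ⟨0, funext fun t => isEmptyElim (T.face_surjective t).choose⟩
    · refine ⟨w (T.face d), funext fun t => ?_⟩
      obtain ⟨d', rfl⟩ := T.face_surjective t
      rw [Pi.smul_apply, Pi.one_apply, smul_eq_mul, mul_one]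
      exact T.eq_of_invariant (f := w ∘ T.face) hα hφ d d'
  · rintro ⟨c, rfl⟩
    ext i
    obtain ⟨d, rfl⟩ := T.edge_surj i
    rw [incidenceMatrix_mulVec, sum_edge_eq]
    exact CharTwo.add_self_eq_zero _

theorem rank_map_wpMatrix_add_two_eq_card_face {K : Type*} [Field K] [CharP K 2] [Nonempty T.D] :
    (T.wpMatrix.map (Int.castRingHom K)).rank + 2 = Fintype.card T.Face := by
  set f := (incidenceMatrix K T.edge T.face).mulVecLin
  set g := (incidenceMatrix K T.face T.edge).mulVecLin
  have hone : g 1 = 1 := by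
    ext t
    obtain ⟨d, rfl⟩ := T.face_surjective t
    rw [mulVecLin_apply, incidenceMatrix_mulVec, sum_face_eq]
    exact CharTwo.add_cancel_right 1 1
  have hker : finrank K f.ker = 1 := by
    have : Nonempty T.Face := .map T.face ‹_›
    rw [T.ker_incidenceMatrix_edge_face, finrank_span_singleton one_ne_zero]
  have hle : f.ker ≤ g.range := by
    rw [T.ker_incidenceMatrix_edge_face, Submodule.span_singleton_le_iff_mem]
    exact ⟨1, hone⟩
  have hcomp : (T.wpMatrix.map (Int.castRingHom K)).rank = finrank K (f ∘ₗ g).range := by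
    rw [map_wpMatrix_eq_mul, rank, mulVecLin_mul]
  have hrank : finrank K g.range = finrank K f.range := by
    have h := rank_transpose (incidenceMatrix K T.edge T.face)
    rwa [transpose_incidenceMatrix] at h
  have h₁ := finrank_range_comp_add_finrank_ker hle
  have h₂ := f.finrank_range_add_finrank_ker
  rw [finrank_fintype_fun_eq_card] at h₂
  lia

end IdealTriangulation

/-- The antisymmetric bilinear form `σ` on `ℤⁿ` (`n = 6g + 3p - 6`) of an ideal
triangulation of a genus `g` surface with `p` punctures is equivalent over `ℤ` to the block
diagonal form consisting of `g` blocks `[[0,-2],[2,0]]`, `k = 2g + p - 3` blocks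
`[[0,-1],[1,0]]`, and `p` blocks `(0)`. -/
theorem wpMatrix_equivalent_blockForm (g p n : ℕ) (hp : 1 ≤ p) (hn : (n : ℤ) = 6 * g + 3 * p - 6)
    (T : IdealTriangulation g p n) :
    ∃ A : Matrix (Fin n) (Fin n) ℤ, IsUnit A.det ∧
      wpBlockForm g (2 * g + p - 3) n = A * T.wpMatrix * A.transpose := by
  have : Nonempty T.D := ⟨(T.vert_surj ⟨0, hp⟩).choose⟩
  have hrank := T.rank_map_wpMatrix_add_punctures (two_ne_zero (α := ℚ))
  have hrank₂ := T.rank_map_wpMatrix_add_two_eq_card_face (K := ZMod 2)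
  have hdarts := T.card_darts
  have hfaces := T.card_eq_three_mul_card_face
  refine exists_wpBlockForm_eq_mul_mul_transpose T.isAlt_toBilin'_wpMatrix ?_ (by lia) (by lia)
  intro r hr z x h
  have hmap : T.wpMatrix.map (Int.castRingHom ℤ) = T.wpMatrix := Matrix.map_id _
  rw [← hmap] at h ⊢
  exact T.exists_map_wpMatrix_mulVec_eq_two_smul hr h
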